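/- (i) For every λ > 0 there exists a unique m ∈ (−∞, −1) such that 2(K(m) − E(m)) = λ (1 + m) K(m). (ii) For every λ ∈ (0, 1) there exists a unique m ∈ (0, 1) such that 2(K(m) − E(m)) = λ (1 + m) K(m). Equivalently, the function m ↦ 2(K(m) − E(m))/((1 + m)K(m)) is a bijection from (−∞, −1) onto (0, +∞) and from (0, 1) onto (0, 1). -/

import Mathlib

open Real

/-- Complete elliptic integral of the first kind (parameter `m`). -/
noncomputable def Kc (m : ℝ) : ℝ := ∫ θ in (0:ℝ)..(π / 2), 1 / Real.sqrt (1 - m * Real.sin θ ^ 2)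

/-- Complete elliptic integral of the second kind (parameter `m`). -/
noncomputable def Ec (m : ℝ) : ℝ := ∫ θ in (0:ℝ)..(π / 2), Real.sqrt (1 - m * Real.sin θ ^ 2)

open Set Filter Topology

/-- The integral of `sin² θ / √(1 - m sin² θ)` over `[0, π / 2]`, equal to `(K(m) - E(m)) / m`. -/
noncomputable def Sc (m : ℝ) : ℝ := ∫ θ in (0:ℝ)..(π / 2), sin θ ^ 2 / √(1 - m * sin θ ^ 2)

/-- The mean of `sin² θ` with respect to the weight `1 / √(1 - m sin² θ)`. -/
noncomputable def sinSqMean (m : ℝ) : ℝ := Sc m / Kc m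

lemma one_sub_mul_pos {m s : ℝ} (hm : m < 1) (h0 : 0 ≤ s) (h1 : s ≤ 1) : 0 < 1 - m * s := by
  nlinarith [mul_nonneg h0 (sub_pos.2 hm).le]

lemma one_sub_mul_sin_sq_pos {m : ℝ} (hm : m < 1) (θ : ℝ) : 0 < 1 - m * sin θ ^ 2 :=
  one_sub_mul_pos hm (sq_nonneg _) (sin_sq_le_one θ)

lemma continuous_div_sqrt {g : ℝ → ℝ} (hg : Continuous g) {m : ℝ} (hm : m < 1) :
    Continuous fun θ => g θ / √(1 - m * sin θ ^ 2) :=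
  hg.div (by fun_prop) fun θ => (sqrt_pos.2 (one_sub_mul_sin_sq_pos hm θ)).ne'

lemma intervalIntegrable_div_sqrt {g : ℝ → ℝ} (hg : Continuous g) {m : ℝ} (hm : m < 1) (a b : ℝ) :
    IntervalIntegrable (fun θ => g θ / √(1 - m * sin θ ^ 2)) MeasureTheory.volume a b :=
  (continuous_div_sqrt hg hm).intervalIntegrable a b

lemma continuousOn_integral_div_sqrt {g : ℝ → ℝ} (hg : Continuous g) :
    ContinuousOn (fun m => ∫ θ in (0:ℝ)..(π / 2), g θ / √(1 - m * sin θ ^ 2)) (Iio 1) := by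
  intro m hm
  obtain ⟨c, hmc, hc⟩ := exists_between (mem_Iio.1 hm)
  have hcont : Continuous fun m => ∫ θ in (0:ℝ)..(π / 2), g θ / √(1 - min m c * sin θ ^ 2) := by
    apply intervalIntegral.continuous_parametric_intervalIntegral_of_continuous'
    refine Continuous.div (by fun_prop) (by fun_prop) fun p => ?_
    exact (sqrt_pos.2 (one_sub_mul_sin_sq_pos ((min_le_right _ _).trans_lt hc) p.2)).ne'
  refine (hcont.continuousAt.congr ?_).continuousWithinAt
  filter_upwards [Iio_mem_nhds hmc] with x hx
  rw [min_eq_left (le_of_lt hx)]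

lemma half_pi_nonneg : (0:ℝ) ≤ π / 2 := by positivity

lemma Kc_pos {m : ℝ} (hm : m < 1) : 0 < Kc m :=
  intervalIntegral.intervalIntegral_pos_of_pos (intervalIntegrable_div_sqrt continuous_const hm _ _)
    (fun θ => one_div_pos.2 (sqrt_pos.2 (one_sub_mul_sin_sq_pos hm θ))) (by positivity)

lemma Sc_pos {m : ℝ} (hm : m < 1) : 0 < Sc m := by
  refine intervalIntegral.intervalIntegral_pos_of_pos_on
    (intervalIntegrable_div_sqrt (by fun_prop) hm _ _) (fun θ hθ => ?_) (by positivity)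
  have hs : 0 < sin θ := sin_pos_of_pos_of_lt_pi hθ.1 (by linarith [hθ.2, pi_pos])
  exact div_pos (by positivity) (sqrt_pos.2 (one_sub_mul_sin_sq_pos hm θ))

lemma Sc_le_Kc {m : ℝ} (hm : m < 1) : Sc m ≤ Kc m := by
  refine intervalIntegral.integral_mono_on half_pi_nonneg
    (intervalIntegrable_div_sqrt (by fun_prop) hm _ _)
    (intervalIntegrable_div_sqrt continuous_const hm _ _) fun θ _ => ?_
  exact div_le_div_of_nonneg_right (sin_sq_le_one θ) (sqrt_nonneg _)

lemma Kc_sub_Ec {m : ℝ} (hm : m < 1) : Kc m - Ec m = m * Sc m := by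
  rw [Kc, Ec, Sc, ← intervalIntegral.integral_const_mul, ← intervalIntegral.integral_sub
    (intervalIntegrable_div_sqrt continuous_const hm _ _)
    (Continuous.intervalIntegrable (by fun_prop) _ _)]
  refine intervalIntegral.integral_congr fun θ _ => ?_
  have hpos := one_sub_mul_sin_sq_pos hm θ
  have hs := sqrt_pos.2 hpos
  have hsq := sq_sqrt hpos.le
  field_simp
  linarith

lemma sinSqMean_pos {m : ℝ} (hm : m < 1) : 0 < sinSqMean m := div_pos (Sc_pos hm) (Kc_pos hm)

lemma sinSqMean_le_one {m : ℝ} (hm : m < 1) : sinSqMean m ≤ 1 :=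
  (div_le_one (Kc_pos hm)).2 (Sc_le_Kc hm)

lemma continuousOn_sinSqMean : ContinuousOn sinSqMean (Iio 1) :=
  ContinuousOn.div (continuousOn_integral_div_sqrt (by fun_prop))
    (continuousOn_integral_div_sqrt continuous_const) fun _ hm => (Kc_pos hm).ne'

/-- The ratio of the weights for `m ≤ n` is monotone in `s`. -/
lemma sub_mul_weight_le {m n s c : ℝ} (hmn : m ≤ n) (hn : n < 1) (hs0 : 0 ≤ s) (hs1 : s ≤ 1)
    (hc0 : 0 ≤ c) (hc1 : c ≤ 1) :
    √(1 - m * c) / √(1 - n * c) * ((s - c) / √(1 - m * s)) ≤ (s - c) / √(1 - n * s) := by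
  have hm : m < 1 := hmn.trans_lt hn
  have hms := one_sub_mul_pos hm hs0 hs1
  have hns := one_sub_mul_pos hn hs0 hs1
  have hmc := one_sub_mul_pos hm hc0 hc1
  have hnc := one_sub_mul_pos hn hc0 hc1
  have key : (s - c) * (√(1 - m * c) * √(1 - n * s)) ≤ (s - c) * (√(1 - n * c) * √(1 - m * s)) := by
    rw [← sqrt_mul hmc.le, ← sqrt_mul hnc.le]
    rcases le_total c s with h | h
    · refine mul_le_mul_of_nonneg_left (sqrt_le_sqrt ?_) (sub_nonneg.2 h)
      nlinarith [mul_nonneg (sub_nonneg.2 hmn) (sub_nonneg.2 h)]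
    · refine mul_le_mul_of_nonpos_left (sqrt_le_sqrt ?_) (sub_nonpos.2 h)
      nlinarith [mul_nonneg (sub_nonneg.2 hmn) (sub_nonneg.2 h)]
  have h1 := sqrt_pos.2 hms
  have h2 := sqrt_pos.2 hns
  have h3 := sqrt_pos.2 hnc
  rw [div_mul_div_comm, div_le_div_iff₀ (by positivity) h2]
  linarith

lemma integral_sin_sq_sub_div_sqrt {m : ℝ} (hm : m < 1) (c : ℝ) :
    ∫ θ in (0:ℝ)..(π / 2), (sin θ ^ 2 - c) / √(1 - m * sin θ ^ 2) = Sc m - c * Kc m := by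
  rw [Kc, Sc, ← intervalIntegral.integral_const_mul, ← intervalIntegral.integral_sub
    (intervalIntegrable_div_sqrt (by fun_prop) hm _ _)
    ((intervalIntegrable_div_sqrt continuous_const hm _ _).const_mul c)]
  refine intervalIntegral.integral_congr fun θ _ => ?_
  ring

lemma monotoneOn_sinSqMean : MonotoneOn sinSqMean (Iio 1) := by
  intro m hm n hn hmn
  rw [mem_Iio] at hm hn
  set c := sinSqMean m with hc
  have hzero : Sc m - c * Kc m = 0 := by
    rw [hc, sinSqMean, div_mul_cancel₀ _ (Kc_pos hm).ne', sub_self]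
  have hint := intervalIntegral.integral_mono_on half_pi_nonneg
    ((intervalIntegrable_div_sqrt (g := fun θ => sin θ ^ 2 - c) (by fun_prop) hm _ _).const_mul
      (√(1 - m * c) / √(1 - n * c)))
    (intervalIntegrable_div_sqrt (g := fun θ => sin θ ^ 2 - c) (by fun_prop) hn _ _)
    fun θ _ => sub_mul_weight_le hmn hn (sq_nonneg _) (sin_sq_le_one θ) (sinSqMean_pos hm).le
      (sinSqMean_le_one hm)
  rw [intervalIntegral.integral_const_mul, integral_sin_sq_sub_div_sqrt hm,
    integral_sin_sq_sub_div_sqrt hn, hzero, mul_zero] at hint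
  rw [sinSqMean, le_div_iff₀ (Kc_pos hn)]
  linarith

lemma integral_one_div_add_mul {a b c : ℝ} (ha : 0 < a) (hb : 0 < b) (hc : 0 ≤ c) :
    ∫ θ in (0:ℝ)..c, 1 / (a + b * θ) = b⁻¹ * log ((a + b * c) / a) := by
  have h := intervalIntegral.integral_comp_add_mul (a := 0) (b := c) (fun x : ℝ => 1 / x) hb.ne' a
  rw [h, integral_one_div_of_pos (by simpa using ha) (by positivity)]
  simp

lemma intervalIntegrable_one_div_add_mul {a b c : ℝ} (ha : 0 < a) (hb : 0 ≤ b) (hc : 0 ≤ c) :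
    IntervalIntegrable (fun θ => 1 / (a + b * θ)) MeasureTheory.volume 0 c := by
  refine ContinuousOn.intervalIntegrable (ContinuousOn.div (by fun_prop) (by fun_prop) ?_)
  intro θ hθ
  rw [uIcc_of_le hc] at hθ
  have := mul_nonneg hb hθ.1
  positivity

lemma neg_half_log_le_Kc {m : ℝ} (hm : m < 1) : -(log (1 - m) / 2) ≤ Kc m := by
  have hε2 : 0 < 1 - m := sub_pos.2 hm
  set ε := √(1 - m) with hε
  have hεpos : 0 < ε := sqrt_pos.2 hε2
  have hεsq : ε ^ 2 = 1 - m := sq_sqrt hε2.le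
  have hrefl : Kc m = ∫ θ in (0:ℝ)..(π / 2), 1 / √(1 - m * cos θ ^ 2) := by
    have h := intervalIntegral.integral_comp_sub_left (a := 0) (b := π / 2)
      (fun θ => 1 / √(1 - m * sin θ ^ 2)) (π / 2)
    simp only [sin_pi_div_two_sub, sub_zero, sub_self] at h
    rw [h, Kc]
  have hpos : ∀ θ : ℝ, 0 < 1 - m * cos θ ^ 2 := fun θ =>
    one_sub_mul_pos hm (sq_nonneg _) (cos_sq_le_one θ)
  have hle : ∫ θ in (0:ℝ)..(π / 2), 1 / (ε + 1 * θ) ≤ Kc m := by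
    rw [hrefl]
    refine intervalIntegral.integral_mono_on half_pi_nonneg
      (intervalIntegrable_one_div_add_mul hεpos zero_le_one half_pi_nonneg)
      (Continuous.intervalIntegrable (Continuous.div (by fun_prop) (by fun_prop)
        fun θ => (sqrt_pos.2 (hpos θ)).ne') _ _) fun θ hθ => ?_
    refine one_div_le_one_div_of_le (sqrt_pos.2 (hpos θ)) ?_
    have hθ0 := hθ.1
    rw [sqrt_le_left (by positivity)]
    have hs1 : sin θ ≤ θ := sin_le hθ0
    have hs0 : 0 ≤ sin θ := sin_nonneg_of_nonneg_of_le_pi hθ0 (by linarith [hθ.2, pi_pos])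
    nlinarith [sin_sq_add_cos_sq θ, mul_nonneg hεpos.le hθ0, mul_nonneg hε2.le (sq_nonneg (sin θ))]
  rw [integral_one_div_add_mul hεpos one_pos half_pi_nonneg] at hle
  have hlog : -log ε ≤ log ((ε + 1 * (π / 2)) / ε) := by
    rw [← log_inv]
    refine log_le_log (by positivity) ?_
    rw [inv_eq_one_div]
    exact div_le_div_of_nonneg_right (by linarith [pi_gt_three]) hεpos.le
  rw [hε, log_sqrt hε2.le] at hlog
  rw [inv_one, one_mul] at hle
  exact hlog.trans hle

lemma Kc_sub_one_le_Sc {m : ℝ} (hm : m < 1) : Kc m - 1 ≤ Sc m := by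
  have h := intervalIntegral.integral_mono_on half_pi_nonneg
    ((intervalIntegrable_div_sqrt (g := fun _ => 1) continuous_const hm 0 (π / 2)).sub
      (intervalIntegrable_div_sqrt (g := fun θ => sin θ ^ 2) (by fun_prop) hm 0 (π / 2)))
    (continuous_cos.intervalIntegrable 0 (π / 2)) fun θ hθ => by
      have hpos := one_sub_mul_sin_sq_pos hm θ
      have hc : 0 ≤ cos θ := cos_nonneg_of_mem_Icc ⟨by linarith [hθ.1, pi_pos], hθ.2⟩
      have hle : cos θ ≤ √(1 - m * sin θ ^ 2) := by
        apply le_sqrt_of_sq_le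
        nlinarith [sin_sq_add_cos_sq θ, mul_nonneg (sub_pos.2 hm).le (sq_nonneg (sin θ))]
      rw [← sub_div, div_le_iff₀ (sqrt_pos.2 hpos)]
      nlinarith [sin_sq_add_cos_sq θ, mul_le_mul_of_nonneg_left hle hc]
  rw [intervalIntegral.integral_sub (intervalIntegrable_div_sqrt continuous_const hm _ _)
    (intervalIntegrable_div_sqrt (by fun_prop) hm _ _), integral_cos] at h
  simp only [sin_pi_div_two, sin_zero, sub_zero] at h
  rw [Kc, Sc]
  linarith

lemma tendsto_Kc_one : Tendsto Kc (𝓝[<] 1) atTop := by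
  have hsub : Tendsto (fun m : ℝ => 1 - m) (𝓝[<] 1) (𝓝[>] 0) := by
    refine tendsto_nhdsWithin_iff.2 ⟨?_, ?_⟩
    · have h : Tendsto (fun m : ℝ => 1 - m) (𝓝 1) (𝓝 (1 - 1)) :=
        (continuous_const.sub continuous_id).tendsto 1
      rw [sub_self] at h
      exact h.mono_left nhdsWithin_le_nhds
    · filter_upwards [self_mem_nhdsWithin] with m hm
      exact sub_pos.2 (mem_Iio.1 hm)
  have hlog := tendsto_neg_atBot_atTop.comp
    ((tendsto_log_nhdsGT_zero.comp hsub).atBot_div_const (zero_lt_two (α := ℝ)))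
  refine tendsto_atTop_mono' _ ?_ hlog
  filter_upwards [self_mem_nhdsWithin] with m hm
  exact neg_half_log_le_Kc hm

lemma tendsto_sinSqMean_one : Tendsto sinSqMean (𝓝[<] 1) (𝓝 1) := by
  have hlow : Tendsto (fun m => 1 - (Kc m)⁻¹) (𝓝[<] 1) (𝓝 1) := by
    simpa using tendsto_const_nhds.sub (tendsto_inv_atTop_zero.comp tendsto_Kc_one)
  refine tendsto_of_tendsto_of_tendsto_of_le_of_le' hlow tendsto_const_nhds ?_ ?_
  · filter_upwards [self_mem_nhdsWithin] with m hm
    have hK := Kc_pos hm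
    rw [sinSqMean, le_div_iff₀ hK, sub_mul, inv_mul_cancel₀ hK.ne', one_mul]
    exact Kc_sub_one_le_Sc hm
  · filter_upwards [self_mem_nhdsWithin] with m hm
    exact sinSqMean_le_one hm

lemma Sc_le_of_neg {m : ℝ} (hm : m < 0) : Sc m ≤ (√(-m))⁻¹ := by
  have hm1 : m < 1 := hm.trans one_pos
  have hr : 0 < √(-m) := sqrt_pos.2 (neg_pos.2 hm)
  have hrsq : √(-m) ^ 2 = -m := sq_sqrt (neg_pos.2 hm).le
  have h := intervalIntegral.integral_mono_on half_pi_nonneg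
    (intervalIntegrable_div_sqrt (g := fun θ => sin θ ^ 2) (by fun_prop) hm1 0 (π / 2))
    ((continuous_sin.intervalIntegrable 0 (π / 2)).const_mul (√(-m))⁻¹) fun θ hθ => by
      have hs0 : 0 ≤ sin θ := sin_nonneg_of_nonneg_of_le_pi hθ.1 (by linarith [hθ.2, pi_pos])
      have hle : √(-m) * sin θ ≤ √(1 - m * sin θ ^ 2) := by
        apply le_sqrt_of_sq_le
        rw [mul_pow, hrsq]
        linarith
      rw [div_le_iff₀ (sqrt_pos.2 (one_sub_mul_sin_sq_pos hm1 θ)), mul_assoc,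
        inv_mul_eq_div, le_div_iff₀ hr]
      nlinarith [mul_le_mul_of_nonneg_left hle hs0]
  rw [intervalIntegral.integral_const_mul, integral_sin] at h
  simpa [Sc] using h

lemma log_le_Kc_of_neg {m : ℝ} (hm : m < 0) : (√(-m))⁻¹ * log (1 + √(-m) * (π / 2)) ≤ Kc m := by
  have hm1 : m < 1 := hm.trans one_pos
  have hr : 0 < √(-m) := sqrt_pos.2 (neg_pos.2 hm)
  have hrsq : √(-m) ^ 2 = -m := sq_sqrt (neg_pos.2 hm).le
  have h := intervalIntegral.integral_mono_on half_pi_nonneg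
    (intervalIntegrable_one_div_add_mul one_pos hr.le half_pi_nonneg)
    (intervalIntegrable_div_sqrt (g := fun _ => 1) continuous_const hm1 0 (π / 2)) fun θ hθ => by
      have hθ0 := hθ.1
      have hs0 : 0 ≤ sin θ := sin_nonneg_of_nonneg_of_le_pi hθ0 (by linarith [hθ.2, pi_pos])
      have hsq : sin θ ^ 2 ≤ θ ^ 2 := pow_le_pow_left₀ hs0 (sin_le hθ0) 2
      refine one_div_le_one_div_of_le (sqrt_pos.2 (one_sub_mul_sin_sq_pos hm1 θ)) ?_
      rw [sqrt_le_left (by positivity)]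
      nlinarith [mul_nonneg hr.le hθ0, mul_le_mul_of_nonneg_left hsq (neg_pos.2 hm).le]
  rwa [integral_one_div_add_mul one_pos hr half_pi_nonneg, div_one] at h

lemma tendsto_sinSqMean_atBot : Tendsto sinSqMean atBot (𝓝 0) := by
  have hlog : Tendsto (fun m : ℝ => log (1 + √(-m) * (π / 2))) atBot atTop :=
    tendsto_log_atTop.comp (tendsto_atTop_add_const_left _ _
      ((tendsto_sqrt_atTop.comp tendsto_neg_atBot_atTop).atTop_mul_const (by positivity)))
  refine tendsto_of_tendsto_of_tendsto_of_le_of_le' tendsto_const_nhds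
    (tendsto_inv_atTop_zero.comp hlog) ?_ ?_
  · filter_upwards [Iio_mem_atBot 1] with m hm
    exact (sinSqMean_pos hm).le
  · filter_upwards [Iio_mem_atBot 0] with m hm
    have hr : 0 < √(-m) := sqrt_pos.2 (neg_pos.2 hm)
    have hl : 0 < log (1 + √(-m) * (π / 2)) :=
      log_pos (lt_add_of_pos_right _ (by positivity))
    rw [sinSqMean, Function.comp_apply, div_le_iff₀ (Kc_pos (hm.trans one_pos)), inv_mul_eq_div,
      le_div_iff₀ hl]
    exact (mul_le_mul_of_nonneg_right (Sc_le_of_neg hm) hl.le).trans (log_le_Kc_of_neg hm)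

lemma ratio_eq {m : ℝ} (hm : m < 1) :
    2 * (Kc m - Ec m) / ((1 + m) * Kc m) = 2 * m / (1 + m) * sinSqMean m := by
  rw [Kc_sub_Ec hm, sinSqMean, div_mul_div_comm, mul_assoc 2 m]

lemma mobius_lt_mobius {a b : ℝ} (hab : a < b) (h : 0 < (1 + a) * (1 + b)) :
    2 * a / (1 + a) < 2 * b / (1 + b) := by
  have ha : 1 + a ≠ 0 := left_ne_zero_of_mul h.ne'
  have hb : 1 + b ≠ 0 := right_ne_zero_of_mul h.ne'
  have hid : 2 * b / (1 + b) - 2 * a / (1 + a) = 2 * (b - a) / ((1 + a) * (1 + b)) := by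
    field_simp
    ring
  have : 0 < 2 * (b - a) / ((1 + a) * (1 + b)) := div_pos (by linarith) h
  linarith

lemma mobius_pos_of_lt_neg_one {m : ℝ} (hm : m < -1) : 0 < 2 * m / (1 + m) :=
  div_pos_of_neg_of_neg (by linarith) (by linarith)

lemma continuousOn_mobius_mul_sinSqMean {s : Set ℝ} (h1 : s ⊆ Iio 1) (h : ∀ m ∈ s, 1 + m ≠ 0) :
    ContinuousOn (fun m => 2 * m / (1 + m) * sinSqMean m) s :=
  (ContinuousOn.div (by fun_prop) (by fun_prop) h).mul (continuousOn_sinSqMean.mono h1)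

lemma Iio_neg_one_subset : Iio (-1 : ℝ) ⊆ Iio 1 := Iio_subset_Iio (by norm_num)

lemma bijOn_Iio : BijOn (fun m => 2 * m / (1 + m) * sinSqMean m) (Iio (-1)) (Ioi 0) := by
  refine ⟨fun m hm => mul_pos (mobius_pos_of_lt_neg_one hm) (sinSqMean_pos (Iio_neg_one_subset hm)),
    StrictMonoOn.injOn ?_, ?_⟩
  · intro a ha b hb hab
    rw [mem_Iio] at ha hb
    exact mul_lt_mul (mobius_lt_mobius hab (mul_pos_of_neg_of_neg (by linarith) (by linarith)))
      (monotoneOn_sinSqMean (Iio_neg_one_subset ha) (Iio_neg_one_subset hb) hab.le)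
      (sinSqMean_pos (Iio_neg_one_subset ha)) (mobius_pos_of_lt_neg_one hb).le
  · refine isPreconnected_Iio.intermediate_value_Ioi (l₁ := atBot) (l₂ := 𝓝[<] (-1))
      (le_principal_iff.2 (Iio_mem_atBot _)) (le_principal_iff.2 self_mem_nhdsWithin)
      (continuousOn_mobius_mul_sinSqMean Iio_neg_one_subset fun m hm => ?_) ?_ ?_
    · rw [mem_Iio] at hm
      linarith
    · have h4 : Tendsto (fun m => 4 * sinSqMean m) atBot (𝓝 0) := by
        simpa using tendsto_sinSqMean_atBot.const_mul 4
      refine tendsto_of_tendsto_of_tendsto_of_le_of_le' tendsto_const_nhds h4 ?_ ?_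
      · filter_upwards [Iio_mem_atBot (-1)] with m hm
        exact (mul_pos (mobius_pos_of_lt_neg_one hm) (sinSqMean_pos (Iio_neg_one_subset hm))).le
      · filter_upwards [Iio_mem_atBot (-2)] with m hm
        rw [mem_Iio] at hm
        refine mul_le_mul_of_nonneg_right ?_ (sinSqMean_pos (by linarith)).le
        rw [div_le_iff_of_neg (by linarith)]
        linarith
    · have hden : Tendsto (fun m : ℝ => 1 + m) (𝓝[<] (-1)) (𝓝[<] 0) := by
        refine tendsto_nhdsWithin_iff.2 ⟨?_, ?_⟩
        · have h : Tendsto (fun m : ℝ => 1 + m) (𝓝 (-1)) (𝓝 (1 + -1)) :=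
            (continuous_const.add continuous_id).tendsto (-1)
          rw [add_neg_cancel] at h
          exact h.mono_left nhdsWithin_le_nhds
        · filter_upwards [self_mem_nhdsWithin] with m hm
          rw [mem_Iio] at hm ⊢
          linarith
      have hnum : Tendsto (fun m : ℝ => 2 * m * sinSqMean m) (𝓝[<] (-1))
          (𝓝 (2 * (-1) * sinSqMean (-1))) := by
        have hc : ContinuousAt sinSqMean (-1) :=
          continuousOn_sinSqMean.continuousAt (Iio_mem_nhds (by norm_num))
        exact ((by fun_prop : ContinuousAt (fun m : ℝ => 2 * m * sinSqMean m) (-1)).tendsto).mono_left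
          nhdsWithin_le_nhds
      have hneg : 2 * (-1) * sinSqMean (-1) < 0 := by
        linarith [sinSqMean_pos (m := -1) (by norm_num)]
      refine (hnum.neg_mul_atBot hneg (tendsto_inv_nhdsLT_zero.comp hden)).congr fun m => ?_
      rw [Function.comp_apply, div_eq_mul_inv]
      ring

lemma Ioo_zero_one_subset : Ioo (0 : ℝ) 1 ⊆ Iio 1 := fun _ hm => hm.2

lemma bijOn_Ioo : BijOn (fun m => 2 * m / (1 + m) * sinSqMean m) (Ioo 0 1) (Ioo 0 1) := by
  have hpos : ∀ m ∈ Ioo (0 : ℝ) 1, 0 < 2 * m / (1 + m) := fun m hm =>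
    div_pos (by linarith [hm.1]) (by linarith [hm.1])
  refine ⟨fun m hm => ⟨mul_pos (hpos m hm) (sinSqMean_pos hm.2), ?_⟩, StrictMonoOn.injOn ?_, ?_⟩
  · have hlt : 2 * m / (1 + m) < 1 := by
      rw [div_lt_one (by linarith [hm.1])]
      linarith [hm.2]
    exact mul_lt_one_of_nonneg_of_lt_one_left (hpos m hm).le hlt (sinSqMean_le_one hm.2)
  · intro a ha b hb hab
    exact mul_lt_mul (mobius_lt_mobius hab (mul_pos (by linarith [ha.1]) (by linarith [hb.1])))
      (monotoneOn_sinSqMean ha.2 hb.2 hab.le) (sinSqMean_pos ha.2) (hpos b hb).le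
  · have hmob : ∀ x : ℝ, 1 + x ≠ 0 → ContinuousAt (fun m : ℝ => 2 * m / (1 + m)) x := fun x hx =>
      ContinuousAt.div (by fun_prop) (by fun_prop) hx
    refine isPreconnected_Ioo.intermediate_value_Ioo (l₁ := 𝓝[>] 0) (l₂ := 𝓝[<] 1)
      (le_principal_iff.2 (Ioo_mem_nhdsGT one_pos)) (le_principal_iff.2 (Ioo_mem_nhdsLT one_pos))
      (continuousOn_mobius_mul_sinSqMean Ioo_zero_one_subset fun m hm => ?_) ?_ ?_
    · linarith [hm.1]
    · have hc := (hmob 0 (by norm_num)).mul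
        (continuousOn_sinSqMean.continuousAt (Iio_mem_nhds one_pos))
      have h : Tendsto (fun m => 2 * m / (1 + m) * sinSqMean m) (𝓝[>] 0)
          (𝓝 (2 * 0 / (1 + 0) * sinSqMean 0)) := hc.tendsto.mono_left nhdsWithin_le_nhds
      rwa [mul_zero, zero_div, zero_mul] at h
    · have h := ((hmob 1 (by norm_num)).tendsto.mono_left
        (nhdsWithin_le_nhds (s := Iio 1))).mul tendsto_sinSqMean_one
      norm_num at h
      exact h

/-- A bijection takes each value in its target exactly once; the equation is cleared of its
denominator. -/
lemma existsUnique_of_bijOn {s t : Set ℝ} {N D : ℝ → ℝ} (h : BijOn (fun m => N m / D m) s t)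
    (hD : ∀ m ∈ s, D m ≠ 0) {y : ℝ} (hy : y ∈ t) : ∃! m, m ∈ s ∧ N m = y * D m := by
  obtain ⟨m, hm, hmy⟩ := h.surjOn hy
  refine ⟨m, ⟨hm, (div_eq_iff (hD m hm)).1 hmy⟩, fun n ⟨hn, hny⟩ => h.injOn hn hm ?_⟩
  exact ((div_eq_iff (hD n hn)).2 hny).trans hmy.symm

theorem stmt_14 :
    -- (i)
    (∀ lam : ℝ, 0 < lam →
      ∃! m : ℝ, m < -1 ∧ 2 * (Kc m - Ec m) = lam * (1 + m) * Kc m) ∧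
    -- (ii)
    (∀ lam : ℝ, lam ∈ Set.Ioo (0 : ℝ) 1 →
      ∃! m : ℝ, m ∈ Set.Ioo (0 : ℝ) 1 ∧ 2 * (Kc m - Ec m) = lam * (1 + m) * Kc m) ∧
    -- equivalently, m ↦ 2(K(m) − E(m))/((1 + m)K(m)) is a bijection
    Set.BijOn (fun m => 2 * (Kc m - Ec m) / ((1 + m) * Kc m))
      (Set.Iio (-1 : ℝ)) (Set.Ioi (0 : ℝ)) ∧
    Set.BijOn (fun m => 2 * (Kc m - Ec m) / ((1 + m) * Kc m))
      (Set.Ioo (0 : ℝ) 1) (Set.Ioo (0 : ℝ) 1) := by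
  have hI : BijOn (fun m => 2 * (Kc m - Ec m) / ((1 + m) * Kc m)) (Iio (-1)) (Ioi 0) :=
    bijOn_Iio.congr fun m hm => (ratio_eq (Iio_neg_one_subset hm)).symm
  have hJ : BijOn (fun m => 2 * (Kc m - Ec m) / ((1 + m) * Kc m)) (Ioo 0 1) (Ioo 0 1) :=
    bijOn_Ioo.congr fun m hm => (ratio_eq hm.2).symm
  refine ⟨fun lam hlam => ?_, fun lam hlam => ?_, hI, hJ⟩
  · simp only [mul_assoc lam]
    refine existsUnique_of_bijOn hI (fun m hm => mul_ne_zero ?_ ?_) hlam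
    · rw [mem_Iio] at hm
      linarith
    · exact (Kc_pos (Iio_neg_one_subset hm)).ne'
  · simp only [mul_assoc lam]
    refine existsUnique_of_bijOn hJ (fun m hm => mul_ne_zero ?_ (Kc_pos hm.2).ne') hlam
    linarith [hm.1]
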